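/- There exists an absolute constant c > 0 such that if the constant c₀ in the definition of k* satisfies c₀ ≥ c, then in the model Y = Xβ* + ξ with p ≥ n, the minimum ℓ2-norm interpolator β̂ satisfies P( ‖β̂ − β*‖₂ ≤ ‖β*‖₂ + 4‖ξ‖₂/√(r_{k*}(Σ)) ) ≥ 1 − 2e^{−n}. -/

import Mathlib

open MeasureTheory ProbabilityTheory Matrix Finset
open scoped ENNReal Classical

noncomputable section

/-- Euclidean (`ℓ2`) norm of a finite real vector. -/
def enorm2 {m : ℕ} (v : Fin m → ℝ) : ℝ := Real.sqrt (∑ i, v i ^ 2)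

/-- The prediction (semi-)norm `‖Σ^{1/2} d‖₂ = √(dᵀ Σ d)`. -/
def predNorm {p : ℕ} (Sig : Matrix (Fin p) (Fin p) ℝ) (d : Fin p → ℝ) : ℝ :=
  Real.sqrt (d ⬝ᵥ Sig.mulVec d)

/-- The standard Gaussian measure `N(0, I_p)` on `ℝ^p`. -/
def stdGaussian (p : ℕ) : Measure (Fin p → ℝ) :=
  Measure.pi fun _ : Fin p => gaussianReal 0 1

/-- `Σ^{1/2} = P Λ^{1/2} Pᵀ` built from the eigendecomposition data. -/
def covHalf (p : ℕ) (lam : ℕ → ℝ) (Porth : Matrix (Fin p) (Fin p) ℝ) :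
    Matrix (Fin p) (Fin p) ℝ :=
  Porth * Matrix.diagonal (fun i : Fin p => Real.sqrt (lam ((i : ℕ) + 1))) * Porthᵀ

/-- The Gaussian law `N(0,Σ)` on `ℝ^p`, realized as the pushforward of `N(0,I_p)`
by `g ↦ Σ^{1/2} g`. -/
def mvGaussian (p : ℕ) (lam : ℕ → ℝ) (Porth : Matrix (Fin p) (Fin p) ℝ) :
    Measure (Fin p → ℝ) :=
  Measure.map (fun g => (covHalf p lam Porth).mulVec g) (stdGaussian p)

/-- `r_k(Σ) = ∑_{i=k}^p λ_i(Σ)` (eigenvalues `1`-indexed). -/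
def rsum (p : ℕ) (lam : ℕ → ℝ) (k : ℕ) : ℝ := ∑ i ∈ Finset.Icc k p, lam i

/-- The set `{k ∈ {1,…,p} : r_k(Σ)/λ_k(Σ) ≥ c₀ n}`. -/
def kstarSet (p : ℕ) (lam : ℕ → ℝ) (c0 : ℝ) (n : ℕ) : Set ℕ :=
  {k | 1 ≤ k ∧ k ≤ p ∧ c0 * n ≤ rsum p lam k / lam k}

/-- `k* = inf { k ∈ {1,…,p} : r_k(Σ)/λ_k(Σ) ≥ c₀ n }`. -/
def kstar (p : ℕ) (lam : ℕ → ℝ) (c0 : ℝ) (n : ℕ) : ℕ := sInf (kstarSet p lam c0 n)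

/-- `ρ = ‖β*‖₂ + 4‖ξ‖₂/√(r_{k*}(Σ))`. -/
def rho (p : ℕ) (lam : ℕ → ℝ) (c0 : ℝ) (n : ℕ) (βstar : Fin p → ℝ) (ξnorm : ℝ) : ℝ :=
  enorm2 βstar + 4 * ξnorm / Real.sqrt (rsum p lam (kstar p lam c0 n))

/-- `r*(η) = inf { r > 0 : ∑ᵢ min(λ_i(Σ), r²) ≤ η n r² }`. -/
def rstar (p n : ℕ) (lam : ℕ → ℝ) (η : ℝ) : ℝ :=
  sInf {r : ℝ | 0 < r ∧ ∑ i : Fin p, min (lam ((i : ℕ) + 1)) (r ^ 2) ≤ η * n * r ^ 2}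

/-- `r̄(γ) = sup { r > 0 : ∑ᵢ min(λ_i(Σ)ρ², r²) ≤ γ ‖ξ‖₂² }`. -/
def rbar (p : ℕ) (lam : ℕ → ℝ) (γ ρ ξnorm : ℝ) : ℝ :=
  sSup {r : ℝ | 0 < r ∧ ∑ i : Fin p, min (lam ((i : ℕ) + 1) * ρ ^ 2) (r ^ 2) ≤ γ * ξnorm ^ 2}

/-- `k̄ = inf { k ≥ k* : r_k(Σ) ≤ (γ/2) r_{k*}(Σ) }`, with `k̄ = p+1` if the set is empty. -/
def kbar (p : ℕ) (lam : ℕ → ℝ) (c0 : ℝ) (n : ℕ) (γ : ℝ) : ℕ :=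
  if _h : {k | kstar p lam c0 n ≤ k ∧
      rsum p lam k ≤ γ / 2 * rsum p lam (kstar p lam c0 n)}.Nonempty
  then sInf {k | kstar p lam c0 n ≤ k ∧
      rsum p lam k ≤ γ / 2 * rsum p lam (kstar p lam c0 n)}
  else p + 1

/-- `b` is a minimum `ℓ2`-norm interpolator for the design `M` and responses `Y`. -/
def IsMinInterp {n p : ℕ} (M : Fin n → Fin p → ℝ) (Y : Fin n → ℝ) (b : Fin p → ℝ) : Prop :=
  (∀ i, ∑ j, M i j * b j = Y i) ∧
    ∀ b' : Fin p → ℝ, (∀ i, ∑ j, M i j * b' j = Y i) → enorm2 b ≤ enorm2 b'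

/-!
If `‖Xᵀ u‖ ≥ κ ‖u‖` for all `u`, then `ξ = X e` with `e` in the range of `Xᵀ` and
`‖e‖ ≤ ‖ξ‖ / κ`, and orthogonality of `β̂` and `e` to the kernel of `X` gives
`‖β̂ - β*‖ ≤ ‖β*‖ + ‖ξ‖ / κ`. For `‖u‖ = 1` the coordinates of `Xᵀ u` along the eigenvectors of `Σ`
are independent centred Gaussians with variances `λ_j`. Keeping only those with `j ≥ k*`, whose
variances are at most `r / (32 n)` with `r = r_{k*}(Σ)`, Chernoff bounds place the squared norm in
`[r / 4, 3 r]` outside an event of probability `2 e^{-4n}`. A volumetric argument over the unit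
ball, at the cost of a factor `17^n`, makes this uniform in `u` with `κ = √r / 4`.
-/

section GaussianSquares

lemma exp_mul_sq_mul_gaussianPDFReal {v : NNReal} (hv : v ≠ 0) (s x : ℝ) :
    gaussianPDFReal 0 v x * Real.exp (s * x ^ 2) =
      (√(2 * Real.pi * v))⁻¹ * Real.exp (-((1 - 2 * s * v) / (2 * v)) * x ^ 2) := by
  rw [gaussianPDFReal, mul_assoc, ← Real.exp_add]
  congr 2
  field_simp
  ring

lemma integrable_exp_mul_sq_gaussianReal (v : NNReal) {s : ℝ} (hs : 2 * s * v < 1) :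
    Integrable (fun x : ℝ => Real.exp (s * x ^ 2)) (gaussianReal 0 v) := by
  rcases eq_or_ne v 0 with rfl | hv
  · simp [integrable_dirac]
  · have hb : 0 < (1 - 2 * s * v) / (2 * v) := div_pos (sub_pos.2 hs) (by positivity)
    rw [gaussianReal_of_var_ne_zero _ hv, integrable_withDensity_iff_integrable_smul₀'
      (by fun_prop) (by simp [gaussianPDF])]
    simp only [gaussianPDF, smul_eq_mul, ENNReal.toReal_ofReal (gaussianPDFReal_nonneg _ _ _),
      exp_mul_sq_mul_gaussianPDFReal hv]
    exact (integrable_exp_neg_mul_sq hb).const_mul _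

lemma mgf_sq_gaussianReal (v : NNReal) {s : ℝ} (hs : 2 * s * v < 1) :
    mgf (fun x => x ^ 2) (gaussianReal 0 v) s = (√(1 - 2 * s * v))⁻¹ := by
  rcases eq_or_ne v 0 with rfl | hv
  · simp [mgf]
  · have : 0 < 1 - 2 * s * v := sub_pos.2 hs
    rw [mgf, integral_gaussianReal_eq_integral_smul hv]
    simp only [smul_eq_mul, exp_mul_sq_mul_gaussianPDFReal hv]
    rw [integral_const_mul, integral_gaussian, ← Real.sqrt_inv, ← Real.sqrt_inv,
      ← Real.sqrt_mul (by positivity)]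
    congr 1
    field_simp

lemma mgf_sq_gaussianReal_le (v : NNReal) {s : ℝ} (hs0 : 0 ≤ s) (hs : 4 * s * v ≤ 1) :
    mgf (fun x => x ^ 2) (gaussianReal 0 v) s ≤ Real.exp (2 * s * v) := by
  have h0 : 0 ≤ s * v := by positivity
  rw [mgf_sq_gaussianReal v (by linarith), ← Real.sqrt_inv, Real.sqrt_le_left (Real.exp_pos _).le,
    ← Real.exp_nat_mul, inv_le_iff_one_le_mul₀ (by linarith)]
  have h := Real.add_one_le_exp ((2 : ℕ) * (2 * s * v))
  push_cast at h ⊢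
  nlinarith

lemma mgf_neg_sq_gaussianReal_le (v : NNReal) {s : ℝ} (hs0 : 0 ≤ s) (hs : 2 * s * v ≤ 1) :
    mgf (fun x => x ^ 2) (gaussianReal 0 v) (-s) ≤ Real.exp (-(s * v) / 2) := by
  have h0 : 0 ≤ s * v := by positivity
  rw [mgf_sq_gaussianReal v (by linarith), ← Real.sqrt_inv, Real.sqrt_le_left (Real.exp_pos _).le,
    ← Real.exp_nat_mul, inv_le_iff_one_le_mul₀ (by linarith)]
  have h := Real.add_one_le_exp ((2 : ℕ) * (-(s * v) / 2))
  push_cast at h ⊢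
  nlinarith

variable {Ω ι : Type*} {mΩ : MeasurableSpace Ω} {P : Measure Ω} {Z : ι → Ω → ℝ} {v : ι → NNReal}
  {S : Finset ι} {t : ℝ}

lemma mgf_sum_sq_of_iIndepFun (hind : iIndepFun Z P)
    (hZ : ∀ j, HasLaw (Z j) (gaussianReal 0 (v j)) P) (s : ℝ) :
    mgf (fun ω => ∑ j ∈ S, Z j ω ^ 2) P s =
      ∏ j ∈ S, mgf (fun x => x ^ 2) (gaussianReal 0 (v j)) s := by
  have hsq : iIndepFun (fun j ω => Z j ω ^ 2) P :=
    hind.comp (fun _ x => x ^ 2) fun _ => by fun_prop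
  rw [← Finset.sum_fn, hsq.mgf_sum₀ (fun j => (hZ j).aemeasurable.pow_const 2)]
  refine Finset.prod_congr rfl fun j _ => ?_
  rw [← (hZ j).map_eq, mgf_map (hZ j).aemeasurable (by fun_prop), Function.comp_def]

lemma integrable_exp_mul_sum_sq_of_iIndepFun (hind : iIndepFun Z P)
    (hZ : ∀ j, HasLaw (Z j) (gaussianReal 0 (v j)) P) {s : ℝ} (hs : ∀ j ∈ S, 2 * s * v j < 1) :
    Integrable (fun ω => Real.exp (s * ∑ j ∈ S, Z j ω ^ 2)) P := by
  by_contra h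
  refine (Finset.prod_pos fun j hj => ?_).ne ((mgf_undef h).symm.trans
    (mgf_sum_sq_of_iIndepFun hind hZ s))
  exact mgf_pos (integrable_exp_mul_sq_gaussianReal (v j) (hs j hj))

lemma measureReal_three_mul_le_sum_sq_le (hind : iIndepFun Z P)
    (hZ : ∀ j, HasLaw (Z j) (gaussianReal 0 (v j)) P) {r : ℝ} (hr0 : 0 < r)
    (hr : ∑ j ∈ S, (v j : ℝ) = r) (ht : 0 ≤ t) (hv : ∀ j ∈ S, 8 * t * v j ≤ r) :
    P.real {ω | 3 * r ≤ ∑ j ∈ S, Z j ω ^ 2} ≤ Real.exp (-t) := by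
  have := hind.isProbabilityMeasure
  set s := t / r with hs
  have hs0 : 0 ≤ s := by positivity
  have hsv : ∀ j ∈ S, 8 * s * v j ≤ 1 := fun j hj => by
    rw [hs, mul_div_assoc', div_mul_eq_mul_div]
    exact (div_le_one hr0).2 (hv j hj)
  have hint := integrable_exp_mul_sum_sq_of_iIndepFun hind hZ (S := S) (s := s) fun j hj => by
    nlinarith [hsv j hj]
  calc P.real {ω | 3 * r ≤ ∑ j ∈ S, Z j ω ^ 2}
      ≤ Real.exp (-s * (3 * r)) * ∏ j ∈ S, mgf (fun x => x ^ 2) (gaussianReal 0 (v j)) s :=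
        (measure_ge_le_exp_mul_mgf _ hs0 hint).trans_eq
          (by rw [mgf_sum_sq_of_iIndepFun hind hZ])
    _ ≤ Real.exp (-s * (3 * r)) * ∏ j ∈ S, Real.exp (2 * s * v j) := by
        gcongr with j hj
        · exact fun _ _ => mgf_nonneg
        · exact mgf_sq_gaussianReal_le _ hs0 (by nlinarith [hsv j hj, (v j).2])
    _ = Real.exp (-t) := by
        rw [← Real.exp_sum, ← Finset.mul_sum, hr, ← Real.exp_add, hs]
        congr 1
        field_simp
        ring

lemma measureReal_sum_sq_le_div_four_le (hind : iIndepFun Z P)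
    (hZ : ∀ j, HasLaw (Z j) (gaussianReal 0 (v j)) P) {r : ℝ} (hr0 : 0 < r)
    (hr : ∑ j ∈ S, (v j : ℝ) = r) (ht : 0 ≤ t) (hv : ∀ j ∈ S, 8 * t * v j ≤ r) :
    P.real {ω | ∑ j ∈ S, Z j ω ^ 2 ≤ r / 4} ≤ Real.exp (-t) := by
  have := hind.isProbabilityMeasure
  set s := 4 * t / r with hs
  have hs0 : 0 ≤ s := by positivity
  have hsv : ∀ j ∈ S, 2 * s * v j ≤ 1 := fun j hj => by
    rw [hs, mul_div_assoc', div_mul_eq_mul_div]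
    exact (div_le_one hr0).2 (by linarith [hv j hj])
  have hint := integrable_exp_mul_sum_sq_of_iIndepFun hind hZ (S := S) (s := -s) fun j _ => by
    have : 0 ≤ s * v j := by positivity
    linarith
  calc P.real {ω | ∑ j ∈ S, Z j ω ^ 2 ≤ r / 4}
      ≤ Real.exp (- -s * (r / 4)) * ∏ j ∈ S, mgf (fun x => x ^ 2) (gaussianReal 0 (v j)) (-s) :=
        (measure_le_le_exp_mul_mgf _ (neg_nonpos.2 hs0) hint).trans_eq
          (by rw [mgf_sum_sq_of_iIndepFun hind hZ])
    _ ≤ Real.exp (- -s * (r / 4)) * ∏ j ∈ S, Real.exp (-s / 2 * v j) := by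
        gcongr with j hj
        · exact fun _ _ => mgf_nonneg
        · exact (mgf_neg_sq_gaussianReal_le _ hs0 (hsv j hj)).trans_eq (by ring_nf)
    _ = Real.exp (-t) := by
        rw [← Real.exp_sum, ← Finset.mul_sum, hr, ← Real.exp_add, hs]
        congr 1
        field_simp
        ring

end GaussianSquares

section RandomOperators

variable {α E F : Type*} [NormedAddCommGroup E] [NormedSpace ℝ E] [NormedAddCommGroup F]
  [NormedSpace ℝ F]

lemma exists_forall_mem_ball_mul_le_norm {f : E →L[ℝ] F} {K ε : ℝ} (hε : ε < 1)
    (hf : K < ‖f‖) :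
    ∃ v : E, ‖v‖ ≤ 1 ∧ ∀ w ∈ Metric.ball v ε, (1 - ε) * K ≤ ‖f w‖ := by
  obtain ⟨v, hv, hvf⟩ := f.exists_lt_apply_of_lt_opNorm
    (show (1 - ε) * K + ε * ‖f‖ < ‖f‖ by nlinarith)
  refine ⟨v, hv.le, fun w hw => ?_⟩
  have hfw : ‖f (v - w)‖ ≤ ε * ‖f‖ := by
    rw [mul_comm]
    exact f.le_opNorm_of_le (by rw [norm_sub_rev]; exact (mem_ball_iff_norm.1 hw).le)
  rw [map_sub] at hfw
  linarith [norm_sub_norm_le (f v) (f w)]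

lemma exists_forall_mem_ball_norm_le_add {f : E →L[ℝ] F} {K κ ε : ℝ} (hf : ‖f‖ ≤ K) {u : E}
    (hu : ‖f u‖ < κ * ‖u‖) :
    ∃ v : E, ‖v‖ = 1 ∧ ∀ w ∈ Metric.ball v ε, ‖f w‖ ≤ κ + ε * K := by
  have hu0 : u ≠ 0 := by rintro rfl; simp at hu
  have hfu : ‖f (‖u‖⁻¹ • u)‖ ≤ κ := by
    rw [map_smul, norm_smul, norm_inv, norm_norm, inv_mul_le_iff₀ (norm_pos_iff.2 hu0), mul_comm]
    exact hu.le
  refine ⟨‖u‖⁻¹ • u, norm_smul_inv_norm hu0, fun w hw => ?_⟩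
  have hfw : ‖f (w - ‖u‖⁻¹ • u)‖ ≤ ε * K := by
    rw [mul_comm]
    exact f.le_of_opNorm_le_of_le hf (mem_ball_iff_norm.1 hw).le
  rw [map_sub] at hfw
  linarith [norm_sub_norm_le (f w) (f (‖u‖⁻¹ • u))]

variable [MeasurableSpace α] [FiniteDimensional ℝ E] [MeasurableSpace E] [BorelSpace E]

/- A random ball of radius `ε` contained in the random set `{w | (a, w) ∈ B}` has a fixed volume,
so averaging the volume of that set over `a` replaces the union bound over an `ε`-net of the
ball. -/
lemma measure_le_of_forall_exists_ball_subset (μ : Measure α) [SFinite μ] {B : Set (α × E)}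
    (hB : MeasurableSet B) {A : Set α} {ε : ℝ} {δ : ℝ≥0∞} (hε : 0 < ε)
    (hA : ∀ a ∈ A, ∃ v : E, ‖v‖ ≤ 1 ∧ ∀ w ∈ Metric.ball v ε, (a, w) ∈ B)
    (hδ : ∀ w : E, ‖w‖ < 1 + ε → μ {a | (a, w) ∈ B} ≤ δ) :
    μ A ≤ ENNReal.ofReal (((1 + ε) / ε) ^ Module.finrank ℝ E) * δ := by
  set vol : Measure E := Measure.addHaar
  set ν : Measure E := vol.restrict (Metric.ball 0 (1 + ε))
  set b := vol (Metric.ball 0 ε)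
  have hb0 : b ≠ 0 := (Metric.measure_ball_pos _ _ hε).ne'
  have hbt : b ≠ ⊤ := measure_ball_lt_top.ne
  have hball : vol (Metric.ball 0 (1 + ε)) =
      ENNReal.ofReal (((1 + ε) / ε) ^ Module.finrank ℝ E) * b := by
    have h := vol.addHaar_ball_mul_of_pos 0 (r := (1 + ε) / ε) (by positivity) ε
    rwa [div_mul_cancel₀ _ hε.ne'] at h
  have hsub : A ⊆ {a | b ≤ ν (Prod.mk a ⁻¹' B)} := by
    intro a ha
    obtain ⟨v, hv, hw⟩ := hA a ha
    have hin : Metric.ball v ε ⊆ Metric.ball 0 (1 + ε) :=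
      Metric.ball_subset_ball' (by rw [dist_zero_right]; linarith)
    calc b = ν (Metric.ball v ε) := by
          rw [Measure.restrict_apply Metric.isOpen_ball.measurableSet, Set.inter_eq_left.2 hin,
            Measure.addHaar_ball_center]
      _ ≤ ν (Prod.mk a ⁻¹' B) := measure_mono fun w h => hw w h
  calc μ A ≤ μ {a | b ≤ ν (Prod.mk a ⁻¹' B)} := measure_mono hsub
    _ ≤ (∫⁻ a, ν (Prod.mk a ⁻¹' B) ∂μ) / b :=
        meas_ge_le_lintegral_div (measurable_measure_prodMk_left hB).aemeasurable hb0 hbt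
    _ = (∫⁻ w, μ ((fun a => (a, w)) ⁻¹' B) ∂ν) / b := by
        rw [← Measure.prod_apply hB, Measure.prod_apply_symm hB]
    _ ≤ (∫⁻ _, δ ∂ν) / b := by
        gcongr ?_ / b
        exact setLIntegral_mono measurable_const fun w hw => hδ w (mem_ball_zero_iff.1 hw)
    _ = ENNReal.ofReal (((1 + ε) / ε) ^ Module.finrank ℝ E) * δ := by
        rw [lintegral_const, Measure.restrict_apply_univ, hball, ← mul_assoc,
          ENNReal.mul_div_cancel_right hb0 hbt, mul_comm]

lemma measure_exists_norm_lt_mul_norm_le (μ : Measure α) [SFinite μ] {f : α → E →L[ℝ] F}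
    (hf : Measurable fun q : α × E => ‖f q.1 q.2‖) {ε K κ : ℝ} (hε0 : 0 < ε) (hε1 : ε < 1)
    (hK : 0 < K) {δ₁ δ₂ : ℝ≥0∞}
    (hupper : ∀ x : E, ‖x‖ = 1 → μ {a | (1 - ε) * K ≤ (1 + ε) * ‖f a x‖} ≤ δ₁)
    (hlower : ∀ x : E, ‖x‖ = 1 → μ {a | (1 - ε) * ‖f a x‖ ≤ κ + ε * K} ≤ δ₂) :
    μ {a | ∃ u, ‖f a u‖ < κ * ‖u‖} ≤
      ENNReal.ofReal (((1 + ε) / ε) ^ Module.finrank ℝ E) * (δ₁ + δ₂) := by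
  have hε : 0 < 1 - ε := sub_pos.2 hε1
  set B : Set (α × E) := {q | (1 - ε) * K ≤ ‖f q.1 q.2‖ ∨ 1 - ε ≤ ‖q.2‖ ∧ ‖f q.1 q.2‖ ≤ κ + ε * K}
  have hB : MeasurableSet B :=
    (measurableSet_le measurable_const hf).union
      ((measurableSet_le measurable_const measurable_snd.norm).inter
        (measurableSet_le hf measurable_const))
  refine measure_le_of_forall_exists_ball_subset μ hB hε0 ?_ fun w hw => ?_
  · rintro a ⟨u, hu⟩
    rcases lt_or_ge K ‖f a‖ with hKf | hKf
    · obtain ⟨v, hv, hball⟩ := exists_forall_mem_ball_mul_le_norm hε1 hKf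
      exact ⟨v, hv, fun w hw => .inl (hball w hw)⟩
    · obtain ⟨v, hv, hball⟩ := exists_forall_mem_ball_norm_le_add hKf hu
      refine ⟨v, hv.le, fun w hw => .inr ⟨?_, hball w hw⟩⟩
      linarith [norm_sub_norm_le v w, mem_ball_iff_norm'.1 hw]
  · rcases eq_or_ne w 0 with rfl | hw0
    · have hempty : {a | (a, (0 : E)) ∈ B} = ∅ := by
        ext a
        simp [B, hε1, mul_pos hε hK]
      simp [hempty]
    · set x := ‖w‖⁻¹ • w
      have hx : ‖x‖ = 1 := norm_smul_inv_norm hw0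
      have hfx : ∀ a, ‖f a w‖ = ‖w‖ * ‖f a x‖ := fun a => by
        rw [map_smul, norm_smul, norm_inv, norm_norm, mul_inv_cancel_left₀ (norm_ne_zero_iff.2 hw0)]
      calc μ {a | (a, w) ∈ B}
          ≤ μ ({a | (1 - ε) * K ≤ (1 + ε) * ‖f a x‖} ∪ {a | (1 - ε) * ‖f a x‖ ≤ κ + ε * K}) := by
            refine measure_mono fun a ha => ?_
            rcases ha with h | ⟨hw1, h⟩ <;> dsimp only at h <;> rw [hfx] at h
            · exact .inl (h.trans (by gcongr))
            · exact .inr (le_trans (by gcongr) h)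
        _ ≤ δ₁ + δ₂ := (measure_union_le _ _).trans (add_le_add (hupper x hx) (hlower x hx))

end RandomOperators

section GaussianRows

variable {n p : ℕ}

instance isProbabilityMeasure_stdGaussian : IsProbabilityMeasure (_root_.stdGaussian p) := by
  unfold _root_.stdGaussian
  infer_instance

instance isProbabilityMeasure_mvGaussian (lam : ℕ → ℝ) (Q : Matrix (Fin p) (Fin p) ℝ) :
    IsProbabilityMeasure (mvGaussian p lam Q) :=
  Measure.isProbabilityMeasure_map (Continuous.measurable (by fun_prop)).aemeasurable

lemma integral_cexp_dotProduct_stdGaussian (t : Fin p → ℝ) :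
    ∫ g, Complex.exp ((g ⬝ᵥ t : ℝ) * Complex.I) ∂(_root_.stdGaussian p) =
      Complex.exp (-(t ⬝ᵥ t : ℝ) / 2) := by
  have h := charFun_stdGaussian (WithLp.toLp 2 t)
  rw [← map_pi_eq_stdGaussian, charFun_apply, integral_map (by fun_prop) (by fun_prop)] at h
  have hnorm : ‖WithLp.toLp 2 t‖ ^ 2 = t ⬝ᵥ t := by
    rw [EuclideanSpace.real_norm_sq_eq]
    simp only [dotProduct, sq]
  rw [← Complex.ofReal_pow, hnorm] at h
  simpa [_root_.stdGaussian, EuclideanSpace.inner_toLp_toLp, dotProduct_comm] using h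

lemma hasLaw_stdGaussian_of_integral_cexp {Ω : Type*} {mΩ : MeasurableSpace Ω} {P : Measure Ω}
    [IsProbabilityMeasure P] {Y : Ω → Fin p → ℝ} (hY : AEMeasurable Y P)
    (h : ∀ t, ∫ ω, Complex.exp ((Y ω ⬝ᵥ t : ℝ) * Complex.I) ∂P =
      Complex.exp (-(t ⬝ᵥ t : ℝ) / 2)) :
    HasLaw Y (_root_.stdGaussian p) P where
  aemeasurable := hY
  map_eq := by
    have := Measure.isProbabilityMeasure_map hY
    refine (MeasurableEquiv.toLp 2 (Fin p → ℝ)).map_measurableEquiv_injective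
      (Measure.ext_of_charFun (E := EuclideanSpace ℝ (Fin p)) (funext fun t => ?_))
    simp only [MeasurableEquiv.coe_toLp, charFun_apply]
    rw [integral_map (by fun_prop) (by fun_prop), integral_map hY (by fun_prop),
      integral_map (by fun_prop) (by fun_prop)]
    simpa [EuclideanSpace.inner_eq_star_dotProduct, dotProduct_comm]
      using (h t.ofLp).trans (integral_cexp_dotProduct_stdGaussian t.ofLp).symm

lemma hasLaw_vecMul_stdGaussian {Q : Matrix (Fin p) (Fin p) ℝ} (hQ : Q * Qᵀ = 1) :
    HasLaw (fun g => g ᵥ* Q) (_root_.stdGaussian p) (_root_.stdGaussian p) := by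
  refine hasLaw_stdGaussian_of_integral_cexp
    (Continuous.measurable (by fun_prop)).aemeasurable fun t => ?_
  have hQt : (Q *ᵥ t) ⬝ᵥ (Q *ᵥ t) = t ⬝ᵥ t := by
    rw [dotProduct_mulVec, ← mulVec_transpose, mulVec_mulVec, mul_eq_one_comm.1 hQ, one_mulVec]
  simp only [← dotProduct_mulVec]
  rw [integral_cexp_dotProduct_stdGaussian, hQt]

lemma hasLaw_vecMul_pi_stdGaussian {w : Fin n → ℝ} (hw : w ⬝ᵥ w = 1) :
    HasLaw (fun G : Fin n → Fin p → ℝ => w ᵥ* Matrix.of G) (_root_.stdGaussian p)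
      (Measure.pi fun _ => _root_.stdGaussian p) := by
  refine hasLaw_stdGaussian_of_integral_cexp
    (Continuous.measurable (by fun_prop)).aemeasurable fun t => ?_
  have hdot : ∀ G : Fin n → Fin p → ℝ, (w ᵥ* Matrix.of G) ⬝ᵥ t = ∑ i, G i ⬝ᵥ (w i • t) :=
    fun G => by
      rw [← dotProduct_mulVec]
      simp only [dotProduct, mulVec, Matrix.of_apply, Pi.smul_apply, smul_eq_mul, Finset.mul_sum,
        mul_left_comm]
  simp only [hdot, Complex.ofReal_sum, Finset.sum_mul, Complex.exp_sum]
  rw [integral_fintype_prod_eq_prod (f := fun i (g : Fin p → ℝ) =>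
    Complex.exp ((g ⬝ᵥ (w i • t) : ℝ) * Complex.I))]
  have hw' : ∑ i, w i * w i = 1 := hw
  have hsum : ∑ i, (w i • t) ⬝ᵥ (w i • t) = t ⬝ᵥ t := by
    simp only [smul_dotProduct, dotProduct_smul, smul_eq_mul, ← mul_assoc, ← Finset.sum_mul, hw',
      one_mul]
  simp_rw [integral_cexp_dotProduct_stdGaussian]
  rw [← Complex.exp_sum, ← hsum]
  push_cast
  rw [← Finset.sum_div, Finset.sum_neg_distrib]

lemma hasLaw_vecMul_diagonal_stdGaussian (d : Fin p → ℝ) :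
    HasLaw (fun g => g ᵥ* Matrix.diagonal fun j => √(d j))
      (Measure.pi fun j => gaussianReal 0 (d j).toNNReal) (_root_.stdGaussian p) where
  aemeasurable := (Continuous.measurable (by fun_prop)).aemeasurable
  map_eq := by
    have hvar : ∀ j, (gaussianReal 0 1).map (· * √(d j)) = gaussianReal 0 (d j).toNNReal :=
      fun j => by
        rw [gaussianReal_map_mul_const]
        congr 1
        · simp
        · ext; simp [Real.sq_sqrt']
    simp_rw [← hvar]
    rw [← Measure.pi_map_pi fun _ => by fun_prop]
    congr
    ext g j
    exact Matrix.vecMul_diagonal _ _ _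

lemma hasLaw_vecMul_vecMul_pi_mvGaussian (lam : ℕ → ℝ) {Q : Matrix (Fin p) (Fin p) ℝ}
    (hQ : Q * Qᵀ = 1) {w : Fin n → ℝ} (hw : w ⬝ᵥ w = 1) :
    HasLaw (fun M : Fin n → Fin p → ℝ => w ᵥ* Matrix.of M ᵥ* Q)
      (Measure.pi fun j : Fin p => gaussianReal 0 (lam (j + 1)).toNNReal)
      (Measure.pi fun _ => mvGaussian p lam Q) := by
  set D := Matrix.diagonal fun j : Fin p => √(lam (j + 1))
  have hcov : (covHalf p lam Q)ᵀ * Q = Q * D := by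
    simp [covHalf, Matrix.mul_assoc, mul_eq_one_comm.1 hQ, D]
  have hrows : HasLaw (fun (G : Fin n → Fin p → ℝ) i => covHalf p lam Q *ᵥ G i)
      (Measure.pi fun _ => mvGaussian p lam Q) (Measure.pi fun _ => _root_.stdGaussian p) :=
    ⟨(Continuous.measurable (by fun_prop)).aemeasurable,
      Measure.pi_map_pi (f := fun _ g => covHalf p lam Q *ᵥ g) fun _ =>
        (Continuous.measurable (by fun_prop)).aemeasurable⟩
  refine HasLaw.comp_of_hasLaw_comp (f := fun M : Fin n → Fin p → ℝ => w ᵥ* Matrix.of M ᵥ* Q)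
    (Continuous.measurable (by fun_prop)).aemeasurable hrows HasLaw.id ?_
  have hcomb : ∀ G : Fin n → Fin p → ℝ,
      w ᵥ* Matrix.of (fun i => covHalf p lam Q *ᵥ G i) ᵥ* Q = w ᵥ* Matrix.of G ᵥ* Q ᵥ* D := by
    intro G
    have : Matrix.of (fun i => covHalf p lam Q *ᵥ G i) = Matrix.of G * (covHalf p lam Q)ᵀ := by
      ext i j
      simp [Matrix.mul_apply, mulVec, dotProduct, mul_comm]
    simp only [this, vecMul_vecMul, Matrix.mul_assoc, hcov]
  simp only [hcomb]
  exact (hasLaw_vecMul_diagonal_stdGaussian fun j : Fin p => lam (j + 1)).fun_comp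
    ((hasLaw_vecMul_stdGaussian hQ).fun_comp (hasLaw_vecMul_pi_stdGaussian hw))

end GaussianRows

section ScoreMap

variable {n p : ℕ} {lam : ℕ → ℝ} {Q : Matrix (Fin p) (Fin p) ℝ} {S : Finset (Fin p)} {r : ℝ}

/-- For a sample `M` and an orthogonal matrix `Q` whose columns are the principal axes, the
transpose of the block of the score matrix `M Q` with columns in `S`, that is, the operator
`w ↦ ((wᵀ M Q)_j)_{j ∈ S}`. -/
def scoreMap (Q : Matrix (Fin p) (Fin p) ℝ) (S : Finset (Fin p)) (M : Fin n → Fin p → ℝ) :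
    EuclideanSpace ℝ (Fin n) →L[ℝ] EuclideanSpace ℝ S :=
  LinearMap.toContinuousLinearMap
    (Matrix.toEuclideanLin ((Matrix.of M * Q)ᵀ.submatrix ((↑) : S → Fin p) id))

lemma norm_sq_scoreMap_apply (Q : Matrix (Fin p) (Fin p) ℝ) (S : Finset (Fin p))
    (M : Fin n → Fin p → ℝ) (w : EuclideanSpace ℝ (Fin n)) :
    ‖scoreMap Q S M w‖ ^ 2 = ∑ j ∈ S, (w.ofLp ᵥ* Matrix.of M ᵥ* Q) j ^ 2 := by
  rw [EuclideanSpace.real_norm_sq_eq, ← Finset.sum_coe_sort S]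
  refine Finset.sum_congr rfl fun j _ => ?_
  rw [vecMul_vecMul, ← mulVec_transpose]
  rfl

lemma norm_scoreMap_apply_le_norm_adjoint (hQ : Q * Qᵀ = 1) (S : Finset (Fin p))
    (M : Fin n → Fin p → ℝ) (w : EuclideanSpace ℝ (Fin n)) :
    ‖scoreMap Q S M w‖ ≤ ‖LinearMap.adjoint (Matrix.toEuclideanLin (Matrix.of M)) w‖ := by
  refine le_of_sq_le_sq ?_ (norm_nonneg _)
  rw [norm_sq_scoreMap_apply, ← Matrix.toEuclideanLin_conjTranspose_eq_adjoint,
    EuclideanSpace.real_norm_sq_eq]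
  set y := w.ofLp ᵥ* Matrix.of M with hy
  calc ∑ j ∈ S, (y ᵥ* Q) j ^ 2 ≤ ∑ j, (y ᵥ* Q) j ^ 2 :=
        Finset.sum_le_sum_of_subset_of_nonneg (Finset.subset_univ S) fun _ _ _ => sq_nonneg _
    _ = (y ᵥ* Q) ⬝ᵥ (y ᵥ* Q) := by simp only [dotProduct, sq]
    _ = y ⬝ᵥ y := by
        rw [← dotProduct_mulVec, ← mulVec_transpose, mulVec_mulVec, hQ, one_mulVec]
    _ = _ := by simp [hy, dotProduct, sq, vecMul, mulVec, mul_comm]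

lemma measurable_norm_scoreMap_apply (Q : Matrix (Fin p) (Fin p) ℝ) (S : Finset (Fin p)) :
    Measurable fun q : (Fin n → Fin p → ℝ) × EuclideanSpace ℝ (Fin n) =>
      ‖scoreMap Q S q.1 q.2‖ := by
  refine Continuous.measurable ?_
  have h : ∀ q : (Fin n → Fin p → ℝ) × EuclideanSpace ℝ (Fin n), ‖scoreMap Q S q.1 q.2‖ =
      √(∑ j ∈ S, (q.2.ofLp ᵥ* Matrix.of q.1 ᵥ* Q) j ^ 2) := fun q => by
    rw [← norm_sq_scoreMap_apply, Real.sqrt_sq (norm_nonneg _)]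
  simp only [h]
  fun_prop

lemma hasLaw_vecMul_vecMul_apply_pi_mvGaussian (lam : ℕ → ℝ) (hQ : Q * Qᵀ = 1) {w : Fin n → ℝ}
    (hw : w ⬝ᵥ w = 1) (j : Fin p) :
    HasLaw (fun M : Fin n → Fin p → ℝ => (w ᵥ* Matrix.of M ᵥ* Q) j)
      (gaussianReal 0 (lam (j + 1)).toNNReal) (Measure.pi fun _ => mvGaussian p lam Q) :=
  (measurePreserving_eval _ j).hasLaw.fun_comp (hasLaw_vecMul_vecMul_pi_mvGaussian lam hQ hw)

lemma iIndepFun_vecMul_vecMul_apply_pi_mvGaussian (lam : ℕ → ℝ) (hQ : Q * Qᵀ = 1) {w : Fin n → ℝ}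
    (hw : w ⬝ᵥ w = 1) :
    iIndepFun (fun (j : Fin p) (M : Fin n → Fin p → ℝ) => (w ᵥ* Matrix.of M ᵥ* Q) j)
      (Measure.pi fun _ => mvGaussian p lam Q) :=
  (iIndepFun_iff_hasLaw_pi_pi
    fun j => hasLaw_vecMul_vecMul_apply_pi_mvGaussian lam hQ hw j).2
      (hasLaw_vecMul_vecMul_pi_mvGaussian lam hQ hw)

lemma dotProduct_self_eq_one_of_norm_eq_one {w : EuclideanSpace ℝ (Fin n)} (hw : ‖w‖ = 1) :
    w.ofLp ⬝ᵥ w.ofLp = 1 := by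
  have h := EuclideanSpace.real_norm_sq_eq w
  rw [hw, one_pow] at h
  simpa only [dotProduct, sq] using h.symm

lemma pi_mvGaussian_three_mul_le_norm_sq_scoreMap_le (hQ : Q * Qᵀ = 1) (hr0 : 0 < r)
    (hr : ∑ j ∈ S, lam (j + 1) = r) (hlam : ∀ j ∈ S, 0 ≤ lam (j + 1)) {t : ℝ} (ht : 0 ≤ t)
    (hlamr : ∀ j ∈ S, 8 * t * lam (j + 1) ≤ r) {w : EuclideanSpace ℝ (Fin n)} (hw : ‖w‖ = 1) :
    (Measure.pi fun _ => mvGaussian p lam Q) {M | 3 * r ≤ ‖scoreMap Q S M w‖ ^ 2} ≤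
      ENNReal.ofReal (Real.exp (-t)) := by
  have hw' := dotProduct_self_eq_one_of_norm_eq_one hw
  have hv : ∀ j ∈ S, ((lam (j + 1)).toNNReal : ℝ) = lam (j + 1) := fun j hj =>
    Real.coe_toNNReal _ (hlam j hj)
  simp only [norm_sq_scoreMap_apply]
  rw [← ofReal_measureReal]
  exact ENNReal.ofReal_le_ofReal (measureReal_three_mul_le_sum_sq_le
    (iIndepFun_vecMul_vecMul_apply_pi_mvGaussian lam hQ hw')
    (hasLaw_vecMul_vecMul_apply_pi_mvGaussian lam hQ hw') hr0
    ((Finset.sum_congr rfl hv).trans hr) ht fun j hj => by rw [hv j hj]; exact hlamr j hj)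

lemma pi_mvGaussian_norm_sq_scoreMap_le_div_four_le (hQ : Q * Qᵀ = 1) (hr0 : 0 < r)
    (hr : ∑ j ∈ S, lam (j + 1) = r) (hlam : ∀ j ∈ S, 0 ≤ lam (j + 1)) {t : ℝ} (ht : 0 ≤ t)
    (hlamr : ∀ j ∈ S, 8 * t * lam (j + 1) ≤ r) {w : EuclideanSpace ℝ (Fin n)} (hw : ‖w‖ = 1) :
    (Measure.pi fun _ => mvGaussian p lam Q) {M | ‖scoreMap Q S M w‖ ^ 2 ≤ r / 4} ≤
      ENNReal.ofReal (Real.exp (-t)) := by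
  have hw' := dotProduct_self_eq_one_of_norm_eq_one hw
  have hv : ∀ j ∈ S, ((lam (j + 1)).toNNReal : ℝ) = lam (j + 1) := fun j hj =>
    Real.coe_toNNReal _ (hlam j hj)
  simp only [norm_sq_scoreMap_apply]
  rw [← ofReal_measureReal]
  exact ENNReal.ofReal_le_ofReal (measureReal_sum_sq_le_div_four_le
    (iIndepFun_vecMul_vecMul_apply_pi_mvGaussian lam hQ hw')
    (hasLaw_vecMul_vecMul_apply_pi_mvGaussian lam hQ hw') hr0
    ((Finset.sum_congr rfl hv).trans hr) ht fun j hj => by rw [hv j hj]; exact hlamr j hj)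

lemma seventeen_pow_mul_exp_neg_four_mul_le (n : ℕ) :
    17 ^ n * Real.exp (-(4 * n)) ≤ Real.exp (-n) := by
  have h17 : 17 ≤ Real.exp 3 := by
    have h := pow_le_pow_left₀ (by norm_num) Real.exp_one_gt_d9.le 3
    rw [← Real.exp_nat_mul] at h
    norm_num at h
    linarith
  calc (17 : ℝ) ^ n * Real.exp (-(4 * n)) ≤ Real.exp 3 ^ n * Real.exp (-(4 * n)) := by gcongr
    _ = Real.exp (-n) := by
      rw [← Real.exp_nat_mul, ← Real.exp_add]
      congr 1
      ring

lemma pi_mvGaussian_exists_norm_scoreMap_lt_le (hQ : Q * Qᵀ = 1) (hr0 : 0 < r)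
    (hr : ∑ j ∈ S, lam (j + 1) = r) (hlam : ∀ j ∈ S, 0 ≤ lam (j + 1))
    (hlamr : ∀ j ∈ S, 32 * n * lam (j + 1) ≤ r) :
    (Measure.pi fun _ : Fin n => mvGaussian p lam Q)
        {M | ∃ u, ‖scoreMap Q S M u‖ < √r / 4 * ‖u‖} ≤
      ENNReal.ofReal (2 * Real.exp (-n)) := by
  have hsqrt : 0 < √r := Real.sqrt_pos.2 hr0
  have hsq : √r ^ 2 = r := Real.sq_sqrt hr0.le
  have ht : (0 : ℝ) ≤ 4 * n := by positivity
  have hlamr' : ∀ j ∈ S, 8 * (4 * n) * lam (j + 1) ≤ r := fun j hj =>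
    le_of_eq_of_le (by ring) (hlamr j hj)
  refine (measure_exists_norm_lt_mul_norm_le _ (measurable_norm_scoreMap_apply Q S)
    (ε := 1 / 16) (K := 2 * √r) (by norm_num) (by norm_num) (by positivity)
    (fun w hw => (measure_mono fun M hM => ?_).trans
      (pi_mvGaussian_three_mul_le_norm_sq_scoreMap_le hQ hr0 hr hlam ht hlamr' hw))
    fun w hw => (measure_mono fun M hM => ?_).trans
      (pi_mvGaussian_norm_sq_scoreMap_le_div_four_le hQ hr0 hr hlam ht hlamr' hw)).trans ?_
  · simp only [Set.mem_ofPred_eq] at hM ⊢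
    nlinarith
  · simp only [Set.mem_ofPred_eq] at hM ⊢
    nlinarith [norm_nonneg (scoreMap Q S M w)]
  · rw [finrank_euclideanSpace_fin, ← ENNReal.ofReal_add (by positivity) (by positivity),
      ← ENNReal.ofReal_mul (by positivity)]
    refine ENNReal.ofReal_le_ofReal ?_
    have hratio : (1 + 1 / 16) / (1 / 16) = (17 : ℝ) := by norm_num
    rw [hratio]
    linarith [seventeen_pow_mul_exp_neg_four_mul_le n]

end ScoreMap

section MinimumNorm

lemma inner_eq_zero_of_forall_norm_le_of_map_eq {E F : Type*} [NormedAddCommGroup E]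
    [InnerProductSpace ℝ E] [AddCommGroup F] [Module ℝ F] {A : E →ₗ[ℝ] F} {b z : E}
    (hb : ∀ b', A b' = A b → ‖b‖ ≤ ‖b'‖) (hz : A z = 0) : inner ℝ b z = 0 := by
  have hmin : ‖b - 0‖ = ⨅ w : LinearMap.ker A, ‖b - w‖ := by
    rw [sub_zero]
    refine le_antisymm (le_ciInf fun w => hb _ ?_) ?_
    · rw [map_sub, LinearMap.mem_ker.1 w.2, sub_zero]
    · have hbdd : BddBelow (Set.range fun w : LinearMap.ker A => ‖b - w‖) :=
        ⟨0, Set.forall_mem_range.2 fun w => norm_nonneg _⟩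
      simpa only [ZeroMemClass.coe_zero, sub_zero] using ciInf_le hbdd 0
  simpa only [sub_zero] using
    (Submodule.norm_eq_iInf_iff_real_inner_eq_zero _ (zero_mem _)).1 hmin z hz

variable {E F : Type*} [NormedAddCommGroup E] [InnerProductSpace ℝ E] [NormedAddCommGroup F]
  [InnerProductSpace ℝ F] [FiniteDimensional ℝ E] [FiniteDimensional ℝ F]

lemma surjective_comp_adjoint_of_forall_mul_norm_le {A : E →ₗ[ℝ] F} {κ : ℝ} (hκ : 0 < κ)
    (hA : ∀ u, κ * ‖u‖ ≤ ‖LinearMap.adjoint A u‖) :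
    Function.Surjective (A ∘ₗ LinearMap.adjoint A) := by
  refine LinearMap.injective_iff_surjective.1 ((injective_iff_map_eq_zero _).2 fun u hu => ?_)
  have hAu : LinearMap.adjoint A u = 0 := by
    rw [← inner_self_eq_zero (𝕜 := ℝ), LinearMap.adjoint_inner_left, ← LinearMap.comp_apply, hu,
      inner_zero_right]
  have h := hA u
  rw [hAu, norm_zero] at h
  exact norm_le_zero_iff.1 (nonpos_of_mul_nonpos_right h hκ)

lemma norm_adjoint_apply_le_norm_div {A : E →ₗ[ℝ] F} {κ : ℝ} (hκ : 0 < κ) {u : F}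
    (hu : κ * ‖u‖ ≤ ‖LinearMap.adjoint A u‖) :
    ‖LinearMap.adjoint A u‖ ≤ ‖A (LinearMap.adjoint A u)‖ / κ := by
  set e := LinearMap.adjoint A u
  have he : ‖e‖ ^ 2 ≤ ‖u‖ * ‖A e‖ := by
    rw [← real_inner_self_eq_norm_sq, LinearMap.adjoint_inner_left]
    exact real_inner_le_norm _ _
  rw [le_div_iff₀ hκ]
  rcases (norm_nonneg e).eq_or_lt with h0 | hpos
  · rw [← h0, zero_mul]
    positivity
  · refine le_of_mul_le_mul_left ?_ hpos
    nlinarith [mul_le_mul_of_nonneg_right hu (norm_nonneg (A e))]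

/- With `e` the minimum-norm solution of `A e = ξ`, the vector `z = b - β - e` lies in the kernel
of `A`, to which both `b` and `e` are orthogonal; hence `‖z‖² = -⟪β, z⟫`. -/
lemma norm_sub_le_norm_add_norm_div {A : E →ₗ[ℝ] F} {κ : ℝ} (hκ : 0 < κ)
    (hA : ∀ u, κ * ‖u‖ ≤ ‖LinearMap.adjoint A u‖) {b β : E} {ξ : F} (hb : A b = A β + ξ)
    (hmin : ∀ b', A b' = A b → ‖b‖ ≤ ‖b'‖) : ‖b - β‖ ≤ ‖β‖ + ‖ξ‖ / κ := by
  obtain ⟨u, hu⟩ := surjective_comp_adjoint_of_forall_mul_norm_le hκ hA ξ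
  set e := LinearMap.adjoint A u with he
  have hAe : A e = ξ := hu
  have henorm : ‖e‖ ≤ ‖ξ‖ / κ := hAe ▸ norm_adjoint_apply_le_norm_div hκ (hA u)
  set z := b - β - e with hz
  have hAz : A z = 0 := by simp only [hz, map_sub, hb, hAe]; abel
  have hbz : inner ℝ b z = 0 := inner_eq_zero_of_forall_norm_le_of_map_eq hmin hAz
  have hez : inner ℝ e z = 0 := by rw [he, LinearMap.adjoint_inner_left, hAz, inner_zero_right]
  have hznorm : ‖z‖ ≤ ‖β‖ := by
    have hzz : ‖z‖ ^ 2 = inner ℝ (-β) z := by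
      rw [← real_inner_self_eq_norm_sq]
      nth_rewrite 1 [hz]
      rw [inner_sub_left, inner_sub_left, hbz, hez, inner_neg_left, zero_sub, sub_zero]
    have hle : ‖z‖ ^ 2 ≤ ‖β‖ * ‖z‖ := by
      simpa only [hzz, norm_neg] using real_inner_le_norm (-β) z
    nlinarith [norm_nonneg z, norm_nonneg β]
  calc ‖b - β‖ = ‖z + e‖ := by rw [hz, sub_add_cancel]
    _ ≤ ‖z‖ + ‖e‖ := norm_add_le _ _
    _ ≤ ‖β‖ + ‖ξ‖ / κ := add_le_add hznorm henorm

lemma enorm2_eq_norm {m : ℕ} (v : Fin m → ℝ) : enorm2 v = ‖WithLp.toLp 2 v‖ := by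
  simp [enorm2, EuclideanSpace.norm_eq]

lemma IsMinInterp.enorm2_sub_le {n p : ℕ} {M : Fin n → Fin p → ℝ} {β b : Fin p → ℝ}
    {ξ : Fin n → ℝ} (h : IsMinInterp M (fun i => (∑ j, M i j * β j) + ξ i) b) {κ : ℝ} (hκ : 0 < κ)
    (hM : ∀ u, κ * ‖u‖ ≤ ‖LinearMap.adjoint (Matrix.toEuclideanLin (Matrix.of M)) u‖) :
    enorm2 (fun j => b j - β j) ≤ enorm2 β + enorm2 ξ / κ := by
  have hiff : ∀ b' : Fin p → ℝ, (∀ i, ∑ j, M i j * b' j = (∑ j, M i j * β j) + ξ i) ↔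
      Matrix.toEuclideanLin (Matrix.of M) (WithLp.toLp 2 b') =
        Matrix.toEuclideanLin (Matrix.of M) (WithLp.toLp 2 β) + WithLp.toLp 2 ξ := fun b' => by
    rw [PiLp.ext_iff]
    rfl
  have hb := (hiff b).1 h.1
  simp only [enorm2_eq_norm]
  refine norm_sub_le_norm_add_norm_div hκ hM hb fun b' hb' => ?_
  simpa only [enorm2_eq_norm] using h.2 b'.ofLp ((hiff b'.ofLp).2 (hb'.trans hb))

end MinimumNorm

section Interpolation

variable {n p : ℕ} {lam : ℕ → ℝ} {Q : Matrix (Fin p) (Fin p) ℝ} {Ω : Type*} {mΩ : MeasurableSpace Ω}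
  {P : Measure Ω} [IsProbabilityMeasure P] {X : Ω → Fin n → Fin p → ℝ} {ξ : Ω → Fin n → ℝ}
  {βstar βhat : Ω → Fin p → ℝ}

lemma ofReal_one_sub_le_measure_enorm2_sub_le (hQ : Q * Qᵀ = 1) {S : Finset (Fin p)} {r : ℝ}
    (hr0 : 0 < r) (hr : ∑ j ∈ S, lam (j + 1) = r) (hlam : ∀ j ∈ S, 0 ≤ lam (j + 1))
    (hlamr : ∀ j ∈ S, 32 * n * lam (j + 1) ≤ r)
    (hX : HasLaw X (Measure.pi fun _ => mvGaussian p lam Q) P)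
    (hβ : ∀ᵐ ω ∂P, IsMinInterp (X ω) (fun i => (∑ j, X ω i j * βstar ω j) + ξ ω i) (βhat ω)) :
    ENNReal.ofReal (1 - 2 * Real.exp (-n)) ≤
      P {ω | enorm2 (fun j => βhat ω j - βstar ω j) ≤
        enorm2 (βstar ω) + 4 * enorm2 (ξ ω) / √r} := by
  set good := {ω | enorm2 (fun j => βhat ω j - βstar ω j) ≤
    enorm2 (βstar ω) + 4 * enorm2 (ξ ω) / √r}
  set bad := {M : Fin n → Fin p → ℝ | ∃ u, ‖scoreMap Q S M u‖ < √r / 4 * ‖u‖}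
  have hae : goodᶜ ≤ᵐ[P] X ⁻¹' bad := by
    filter_upwards [hβ] with ω hω hgood
    by_contra hbad
    have hlow : ∀ u, √r / 4 * ‖u‖ ≤ ‖scoreMap Q S (X ω) u‖ := fun u =>
      le_of_not_gt fun hu => hbad ⟨u, hu⟩
    have h := hω.enorm2_sub_le (κ := √r / 4) (by positivity) fun u =>
      (hlow u).trans (norm_scoreMap_apply_le_norm_adjoint hQ S _ u)
    rw [div_div_eq_mul_div, mul_comm] at h
    exact hgood h
  have hcompl : P goodᶜ ≤ ENNReal.ofReal (2 * Real.exp (-n)) :=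
    calc P goodᶜ ≤ P (X ⁻¹' bad) := measure_mono_ae hae
      _ ≤ P.map X bad := Measure.le_map_apply hX.aemeasurable _
      _ ≤ ENNReal.ofReal (2 * Real.exp (-n)) := by
        rw [hX.map_eq]
        exact pi_mvGaussian_exists_norm_scoreMap_lt_le hQ hr0 hr hlam hlamr
  rw [ENNReal.ofReal_sub _ (by positivity), ENNReal.ofReal_one, tsub_le_iff_right]
  calc (1 : ℝ≥0∞) = P (good ∪ goodᶜ) := by rw [Set.union_compl_self, measure_univ]
    _ ≤ P good + P goodᶜ := measure_union_le _ _
    _ ≤ P good + ENNReal.ofReal (2 * Real.exp (-n)) := by gcongr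

lemma sum_filter_le_eq_rsum (p : ℕ) (lam : ℕ → ℝ) {k : ℕ} (hk : 1 ≤ k) :
    ∑ j ∈ Finset.univ.filter (fun j : Fin p => k ≤ j + 1), lam (j + 1) = rsum p lam k := by
  refine Finset.sum_bij (fun j _ => (j : ℕ) + 1) (fun j hj => ?_) (fun i _ j _ h => ?_)
    (fun i hi => ?_) fun _ _ => rfl
  · exact Finset.mem_Icc.2 ⟨(Finset.mem_filter.1 hj).2, j.2⟩
  · exact Fin.ext (Nat.succ_injective h)
  · rw [Finset.mem_Icc] at hi
    exact ⟨⟨i - 1, by omega⟩, Finset.mem_filter.2 ⟨Finset.mem_univ _, by dsimp; omega⟩,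
      by dsimp; omega⟩

lemma pos_and_mul_le_rsum_of_mem_kstarSet {c0 : ℝ} {k : ℕ} (hc0 : 0 < c0) (hn : 0 < n)
    (hlam : 0 ≤ lam k) (hk : k ∈ kstarSet p lam c0 n) :
    0 < lam k ∧ c0 * n * lam k ≤ rsum p lam k := by
  obtain ⟨-, -, hk⟩ := hk
  have hlam0 : lam k ≠ 0 := fun h => by
    have : 0 < c0 * n := by positivity
    rw [h, div_zero] at hk
    exact hk.not_gt this
  have hpos := hlam.lt_of_ne' hlam0
  exact ⟨hpos, (le_div_iff₀ hpos).1 hk⟩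

end Interpolation

theorem stmt4_general {n p k : ℕ} {c0 : ℝ} {lam : ℕ → ℝ} {Q : Matrix (Fin p) (Fin p) ℝ}
    {Ω : Type*} {mΩ : MeasurableSpace Ω} {P : Measure Ω} [IsProbabilityMeasure P]
    {X : Ω → Fin n → Fin p → ℝ} {ξ : Ω → Fin n → ℝ} {βstar βhat : Ω → Fin p → ℝ}
    (hc0 : 32 ≤ c0) (hn : 0 < n) (hk : k ∈ kstarSet p lam c0 n)
    (hlam : ∀ i, k ≤ i → i ≤ p → 0 ≤ lam i) (hle : ∀ i, k ≤ i → i ≤ p → lam i ≤ lam k)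
    (hQ : Q * Qᵀ = 1) (hX : HasLaw X (Measure.pi fun _ => mvGaussian p lam Q) P)
    (hβ : ∀ᵐ ω ∂P, IsMinInterp (X ω) (fun i => (∑ j, X ω i j * βstar ω j) + ξ ω i) (βhat ω)) :
    ENNReal.ofReal (1 - 2 * Real.exp (-n)) ≤
      P {ω | enorm2 (fun j => βhat ω j - βstar ω j) ≤
        enorm2 (βstar ω) + 4 * enorm2 (ξ ω) / √(rsum p lam k)} := by
  obtain ⟨hlam0, hlamr⟩ :=
    pos_and_mul_le_rsum_of_mem_kstarSet (by linarith) hn (hlam k le_rfl hk.2.1) hk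
  have hr0 : 0 < rsum p lam k := lt_of_lt_of_le (by positivity) hlamr
  have hS : ∀ j ∈ Finset.univ.filter (fun j : Fin p => k ≤ j + 1), k ≤ j + 1 := fun j hj =>
    (Finset.mem_filter.1 hj).2
  refine ofReal_one_sub_le_measure_enorm2_sub_le hQ hr0 (sum_filter_le_eq_rsum p lam hk.1)
    (fun j hj => hlam _ (hS j hj) j.2) (fun j hj => ?_) hX hβ
  calc 32 * n * lam (j + 1) ≤ 32 * n * lam k := by
        gcongr
        exact hle _ (hS j hj) j.2
    _ ≤ c0 * n * lam k := by gcongr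
    _ ≤ rsum p lam k := hlamr

/-- Theorem 2: there exists an absolute constant `c > 0` such that if
the constant `c₀` in the definition of `k*` satisfies `c₀ ≥ c`, then in the model
`Y = Xβ* + ξ` with `p ≥ n` and i.i.d. `N(0,Σ)` rows, the minimum `ℓ2`-norm interpolator
satisfies `P(‖β̂ - β*‖₂ ≤ ‖β*‖₂ + 4‖ξ‖₂/√(r_{k*}(Σ))) ≥ 1 - 2e^{-n}`. -/
theorem stmt4 :
    ∃ c > (0 : ℝ), ∀ c0 : ℝ, c ≤ c0 →
    ∀ (n p : ℕ), 0 < n → n ≤ p →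
    ∀ (lam : ℕ → ℝ) (Porth Sig : Matrix (Fin p) (Fin p) ℝ),
      (∀ k, 1 ≤ k → k ≤ p → 0 ≤ lam k) →
      (∀ j k, 1 ≤ j → j ≤ k → k ≤ p → lam k ≤ lam j) →
      Porth * Porthᵀ = 1 →
      Sig = Porth * Matrix.diagonal (fun i : Fin p => lam ((i : ℕ) + 1)) * Porthᵀ →
      n ≤ Sig.rank →
    ∀ (Ω : Type) (_ : MeasurableSpace Ω) (P : Measure Ω), IsProbabilityMeasure P →
    ∀ (X : Ω → Fin n → Fin p → ℝ) (ξ : Ω → Fin n → ℝ) (βstar : Fin p → ℝ)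
      (βhat : Ω → Fin p → ℝ),
      Measure.map X P = (Measure.pi fun _ : Fin n => mvGaussian p lam Porth) →
      (∀ᵐ ω ∂P, IsMinInterp (X ω)
        (fun i => (∑ j, X ω i j * βstar j) + ξ ω i) (βhat ω)) →
      (kstarSet p lam c0 n).Nonempty →
      ENNReal.ofReal (1 - 2 * Real.exp (-(n : ℝ))) ≤
        P {ω | enorm2 (fun j => βhat ω j - βstar j) ≤
               enorm2 βstar + 4 * enorm2 (ξ ω) /
                 Real.sqrt (rsum p lam (kstar p lam c0 n))} := by
  refine ⟨32, by norm_num, fun c0 hc0 n p hn _ lam Q _ hlam hanti hQ _ _ Ω _ P _ X ξ βstar βhat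
    hX hβ hk => ?_⟩
  obtain ⟨hk1, -⟩ := Nat.sInf_mem hk
  exact stmt4_general hc0 hn (Nat.sInf_mem hk) (fun i hi => hlam i (hk1.trans hi))
    (fun i => hanti _ i hk1) hQ ⟨.of_map_ne_zero (hX ▸ IsProbabilityMeasure.ne_zero _), hX⟩ hβ
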